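/- Let f_k, for multi-indices k ∈ (ℕ∪{0})^d with ‖k‖ ≤ K, be almost periodic tempered distributions on ℝ^d, and set f = Σ_{‖k‖≤K} x^k f_k, where x^k f_k denotes the tempered distribution φ ↦ f_k(x^k φ) and x^k = x_1^{k_1}⋯x_d^{k_d}. If supp f has bounded density, then supp f_k has bounded density for every k with ‖k‖ ≤ K. -/

import Mathlib

open MeasureTheory SchwartzMap Metric Set
open scoped Pointwise RealInnerProductSpace ENNReal NNReal

noncomputable section

/-- Euclidean space `ℝ^d`. -/
abbrev Rd (d : ℕ) : Type := EuclideanSpace ℝ (Fin d)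

/-- The space `S*(ℝ^d)` of tempered distributions: continuous linear functionals
on the Schwartz space `S(ℝ^d)`. -/
abbrev TemperedDist (d : ℕ) : Type := SchwartzMap (Rd d) ℂ →L[ℂ] ℂ

/-- The Fourier transform of a tempered distribution: `f̂(φ) = f(φ̂)`. -/
def fourierTD {d : ℕ} (f : TemperedDist d) : TemperedDist d :=
  f.comp (fourierTransformCLM ℂ)

/-- The support of a tempered distribution: `x ∈ supp f` iff for every open
neighbourhood `U` of `x` there is a smooth compactly supported test function
supported in `U` on which `f` does not vanish. -/
def tdSupport {d : ℕ} (f : TemperedDist d) : Set (Rd d) :=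
  {x | ∀ U : Set (Rd d), IsOpen U → x ∈ U →
    ∃ φ : SchwartzMap (Rd d) ℂ, HasCompactSupport (⇑φ) ∧ tsupport (⇑φ) ⊆ U ∧ f φ ≠ 0}

/-- A set is locally finite if its intersection with every ball is finite. -/
def LocFinite {d : ℕ} (A : Set (Rd d)) : Prop :=
  ∀ (x : Rd d) (r : ℝ), (A ∩ Metric.ball x r).Finite

/-- A set is uniformly discrete if distances between distinct points are
bounded below by a positive constant. -/
def UniformlyDiscrete {d : ℕ} (A : Set (Rd d)) : Prop :=
  ∃ η > (0:ℝ), ∀ x ∈ A, ∀ y ∈ A, x ≠ y → η ≤ dist x y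

/-- A set is polynomially discrete (p-discrete) if
`|x - x'| ≥ c min{1, |x|^{-h}}` for distinct points `x, x'` of the set. -/
def PDiscrete {d : ℕ} (A : Set (Rd d)) : Prop :=
  ∃ c > (0:ℝ), ∃ h > (0:ℝ), ∀ x ∈ A, ∀ y ∈ A, x ≠ y →
    c * (if ‖x‖ ≤ 1 then 1 else ‖x‖ ^ (-h)) ≤ dist x y

/-- A set has bounded density if it is locally finite and the number of its
points in balls of radius 1 is uniformly bounded. -/
def BoundedDensity {d : ℕ} (A : Set (Rd d)) : Prop :=
  LocFinite A ∧ ∃ N : ℕ, ∀ x : Rd d, (A ∩ Metric.ball x 1).ncard ≤ N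

/-- A set is relatively dense if it intersects every ball of some fixed radius `R`. -/
def RelDense {d : ℕ} (A : Set (Rd d)) : Prop :=
  ∃ R : ℝ, 0 < R ∧ ∀ x : Rd d, ∃ a ∈ A, dist x a ≤ R

/-- A full-rank lattice in `ℝ^d` is the image of `ℤ^d` under an invertible
linear operator. -/
def IsFullRankLattice {d : ℕ} (L : Set (Rd d)) : Prop :=
  ∃ T : Rd d →ₗ[ℝ] Rd d, Function.Bijective T ∧
    L = T '' {x : Rd d | ∀ i, ∃ n : ℤ, x i = (n : ℝ)}

/-- The multi-indices `k ∈ (ℕ ∪ {0})^d` with `‖k‖ = k₁ + ⋯ + k_d ≤ K`. -/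
def mIdx (d K : ℕ) : Finset (Fin d → ℕ) :=
  (Finset.Iic fun _ => K).filter fun k => (∑ i, k i) ≤ K

/-- Partial derivative in the `i`-th coordinate direction. -/
def pderiv' {d : ℕ} (i : Fin d) (φ : Rd d → ℂ) : Rd d → ℂ :=
  fun x => fderiv ℝ φ x (EuclideanSpace.single i (1:ℝ))

/-- The mixed partial derivative `D^k = ∂^{k₁}_{x₁} ⋯ ∂^{k_d}_{x_d}`. -/
def Dmulti {d : ℕ} (k : Fin d → ℕ) : (Rd d → ℂ) → (Rd d → ℂ) :=
  ((List.finRange d).map fun i => (pderiv' i)^[k i]).foldr (· ∘ ·) id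

/-- The action of `D^k δ_λ` on a test function: `φ ↦ (-1)^{‖k‖} (D^k φ)(λ)`. -/
def dkDelta {d : ℕ} (k : Fin d → ℕ) (lam : Rd d) (φ : SchwartzMap (Rd d) ℂ) : ℂ :=
  (-1 : ℂ) ^ (∑ i, k i) * Dmulti k (⇑φ) lam

/-- The exponential `e^{2πi⟨x,w⟩}`. -/
def e2pi {d : ℕ} (x w : Rd d) : ℂ :=
  Complex.exp (((2 * Real.pi : ℝ) : ℂ) * Complex.I * ((⟪x, w⟫ : ℝ) : ℂ))

/-- A trigonometric polynomial: a finite sum `Σ c_ω e^{2πi⟨x,ω⟩}`. -/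
def IsTrigPoly {d : ℕ} (P : Rd d → ℂ) : Prop :=
  ∃ (n : ℕ) (cc : Fin n → ℂ) (w : Fin n → Rd d),
    ∀ x, P x = ∑ i, cc i * e2pi x (w i)

/-- The monomial `x^m = x₁^{m₁} ⋯ x_d^{m_d}` (as a complex number). -/
def monom {d : ℕ} (m : Fin d → ℕ) (x : Rd d) : ℂ := ((∏ i, (x i) ^ (m i) : ℝ) : ℂ)

/-- The total variation of the pure point measure with masses `b` on the open
ball `B(0,r)`: `Σ_{|γ| < r} |b(γ)|` (as an extended nonnegative real). -/
def ballVar {d : ℕ} (b : Rd d → ℂ) (r : ℝ) : ℝ≥0∞ :=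
  ∑' γ : Rd d, if ‖γ‖ < r then (‖b γ‖₊ : ℝ≥0∞) else 0

/-- The pure point measure `μ = Σ_λ a(λ) δ_λ` belongs to `S*(ℝ^d)` and is
represented there by the tempered distribution `f`: its support is countable,
`Σ_λ |a(λ)| |φ(λ)| < ∞` for every Schwartz function `φ`, and the (automatically
continuous) functional `φ ↦ Σ_λ a(λ) φ(λ)` coincides with `f`. -/
def RepMeasure {d : ℕ} (a : Rd d → ℂ) (f : TemperedDist d) : Prop :=
  {x | a x ≠ 0}.Countable ∧
  (∀ φ : SchwartzMap (Rd d) ℂ, Summable fun lam => ‖a lam‖ * ‖φ lam‖) ∧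
  (∀ φ : SchwartzMap (Rd d) ℂ, f φ = ∑' lam, a lam * φ lam)

/-- A continuous function on `ℝ^d` is almost periodic if for every `ε > 0` its
set of `ε`-almost periods is relatively dense. -/
def APFunction {d : ℕ} (g : Rd d → ℂ) : Prop :=
  Continuous g ∧ ∀ ε > (0:ℝ), RelDense {τ : Rd d | ∀ t, ‖g (t + τ) - g t‖ < ε}

/-- A tempered distribution is almost periodic if for every smooth compactly
supported `ψ` the function `t ↦ f(ψ(t - ·))` is almost periodic. -/
def APDistribution {d : ℕ} (f : TemperedDist d) : Prop :=
  ∀ ψ : Rd d → ℂ, ContDiff ℝ (⊤ : ℕ∞) ψ → HasCompactSupport ψ →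
    ∀ Φ : Rd d → SchwartzMap (Rd d) ℂ, (∀ t y, Φ t y = ψ (t - y)) →
      APFunction fun t => f (Φ t)

section Helpers
open scoped ContDiff Manifold Topology
open Filter

lemma exists_mem_supp {d : ℕ} (f : TemperedDist d) (φ : SchwartzMap (Rd d) ℂ)
    (hc : HasCompactSupport (⇑φ)) (hne : f φ ≠ 0) :
    ∃ q ∈ tdSupport f, q ∈ tsupport (⇑φ) := by
  by_contra hcon
  push Not at hcon
  have h1 : ∀ x ∈ tsupport (⇑φ), ∃ U : Set (Rd d), IsOpen U ∧ x ∈ U ∧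
      ∀ ψ : SchwartzMap (Rd d) ℂ, HasCompactSupport (⇑ψ) → tsupport (⇑ψ) ⊆ U → f ψ = 0 := by
    intro x hx
    have h2 : x ∉ tdSupport f := fun h => hcon x h hx
    simp only [tdSupport, mem_setOf_eq, not_forall, not_exists, not_and, not_not] at h2
    obtain ⟨U, hU, hxU, h⟩ := h2
    exact ⟨U, hU, hxU, h⟩
  choose! U hUo hUx hU using h1
  obtain ⟨t, htC, hcov⟩ := hc.isCompact.elim_nhds_subcover U
    (fun x hx => (hUo x hx).mem_nhds (hUx x hx))
  obtain ⟨ρ, hρ⟩ := SmoothPartitionOfUnity.exists_isSubordinate (𝓘(ℝ, Rd d))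
    (isClosed_tsupport (⇑φ)) (fun i : t => U i) (fun i => hUo i (htC i i.2))
    (by simpa [iUnion_subtype] using hcov)
  have hsm : ∀ i : t, ContDiff ℝ ∞ (fun x => ((ρ i x : ℝ) : ℂ) * φ x) := by
    intro i
    have := (ρ i).contMDiff.contDiff
    exact (Complex.ofRealCLM.contDiff.comp this).mul (φ.smooth _)
  have hcs : ∀ i : t, HasCompactSupport (fun x => ((ρ i x : ℝ) : ℂ) * φ x) := fun i =>
    hc.mul_left
  have hsum : φ = ∑ i : t, (hcs i).toSchwartzMap (hsm i) := by
    ext x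
    rw [SchwartzMap.sum_apply]
    change φ x = ∑ i : t, ((ρ i x : ℝ) : ℂ) * φ x
    rw [← Finset.sum_mul]
    by_cases hx : x ∈ tsupport (⇑φ)
    · have := ρ.sum_eq_one hx
      rw [finsum_eq_sum_of_fintype] at this
      rw [← Complex.ofReal_sum, this]; simp
    · rw [image_eq_zero_of_notMem_tsupport hx]; simp
  apply hne
  rw [hsum, map_sum]
  refine Finset.sum_eq_zero fun i _ => hU i (htC i i.2) _ (hcs i) ?_
  refine subset_trans ?_ (hρ i)
  refine closure_mono ?_
  intro x hx
  simp only [Function.mem_support] at hx ⊢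
  intro h0
  apply hx
  change ((ρ i x : ℝ) : ℂ) * φ x = 0
  rw [h0]; simp

lemma ap_return {d : ℕ} {ι : Type*} [Fintype ι] (F : ι → Rd d → ℂ) (hF : ∀ a, APFunction (F a))
    (w : Rd d) (ε : ℝ) (hε : 0 < ε) (M : ℕ) :
    ∃ r : ℕ, M < r ∧ ∀ a, ‖F a ((r : ℝ) • w) - F a 0‖ < ε := by
  have h1 : ∀ a, ∃ δ > 0, ∀ s : Rd d, ‖s‖ < δ → ‖F a s - F a 0‖ < ε / 3 := by
    intro a
    obtain ⟨δ, hδ, h⟩ := Metric.continuousAt_iff.1 ((hF a).1.continuousAt (x := 0)) (ε/3) (by linarith)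
    refine ⟨δ, hδ, fun s hs => ?_⟩
    rw [← dist_eq_norm]
    exact h (by simpa using hs)
  choose δ hδ h1 using h1
  have h2 := fun a => (hF a).2 (ε / 3) (by linarith)
  choose R hR h2 using h2
  choose τ hτ hd using h2
  -- remainder
  let s : ℕ → ι → Rd d := fun n a => ((n * (M + 1) : ℕ) : ℝ) • w - τ a (((n * (M + 1) : ℕ) : ℝ) • w)
  have hs : ∀ n, s n ∈ Set.pi univ (fun a => closedBall (0 : Rd d) (R a)) := by
    intro n a _
    have := hd a (((n * (M + 1) : ℕ) : ℝ) • w)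
    simpa [s, dist_eq_norm] using this
  obtain ⟨L, -, φ, hφ, hL⟩ := (isCompact_univ_pi (fun a => isCompact_closedBall (0 : Rd d) (R a))).tendsto_subseq hs
  have hev : ∀ᶠ n in atTop, ∀ a, dist ((s ∘ φ) n a) (L a) < δ a / 2 := by
    rw [eventually_all]
    intro a
    exact (tendsto_pi_nhds.1 hL a).eventually (Metric.ball_mem_nhds _ (half_pos (hδ a)))
  obtain ⟨N, hN⟩ := eventually_atTop.1 hev
  have hlt : φ N < φ (N+1) := hφ (Nat.lt_succ_self N)
  refine ⟨(φ (N+1) - φ N) * (M+1), ?_, fun a => ?_⟩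
  · have : 1 ≤ φ (N+1) - φ N := by omega
    nlinarith
  · have e1 := hN N le_rfl a
    have e2 := hN (N+1) (by omega) a
    have e3 : ‖s (φ (N+1)) a - s (φ N) a‖ < δ a := by
      rw [← dist_eq_norm]
      calc _ ≤ _ := dist_triangle_right _ _ (L a)
        _ < δ a := by simp only [Function.comp] at e1 e2; linarith
    have e4 := h1 a _ e3
    set τ1 := τ a (((φ N * (M + 1) : ℕ) : ℝ) • w) with hτ1
    set τ2 := τ a (((φ (N+1) * (M + 1) : ℕ) : ℝ) • w) with hτ2
    have p1 := hτ a (((φ N * (M + 1) : ℕ) : ℝ) • w)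
    have p2 := hτ a (((φ (N+1) * (M + 1) : ℕ) : ℝ) • w)
    simp only [mem_setOf_eq] at p1 p2
    rw [← hτ1] at p1
    rw [← hτ2] at p2
    have q1 := p1 (s (φ (N+1)) a - s (φ N) a - τ1)
    have q2 := p2 (s (φ (N+1)) a - s (φ N) a - τ1)
    have e5 : s (φ (N+1)) a - s (φ N) a - τ1 + τ2 =
        ((((φ (N+1) - φ N) * (M+1) : ℕ) : ℝ)) • w := by
      have : ((((φ (N+1) - φ N) * (M+1) : ℕ) : ℝ)) =
        ((φ (N+1) * (M + 1) : ℕ) : ℝ) - ((φ N * (M + 1) : ℕ) : ℝ) := by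
        push_cast [Nat.cast_sub hlt.le]; ring
      rw [this, sub_smul]
      simp only [s]
      rw [← hτ1, ← hτ2]
      abel
    rw [e5] at q2
    rw [sub_add_cancel] at q1
    rw [norm_sub_rev] at q1
    calc _ = ‖(F a ((((φ (N+1) - φ N) * (M+1) : ℕ) : ℝ) • w) - F a (s (φ (N+1)) a - s (φ N) a - τ1))
        + (F a (s (φ (N+1)) a - s (φ N) a - τ1) - F a (s (φ (N+1)) a - s (φ N) a))
        + (F a (s (φ (N+1)) a - s (φ N) a) - F a 0)‖ := by congr 1; ring
      _ ≤ _ := norm_add₃_le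
      _ < ε := by linarith

lemma ap_seq {d : ℕ} {ι : Type*} [Fintype ι] (F : ι → Rd d → ℂ) (hF : ∀ a, APFunction (F a))
    (w : Rd d) : ∃ r : ℕ → ℕ, (∀ n, n < r n) ∧
      ∀ a, Tendsto (fun n => F a ((r n : ℝ) • w)) atTop (𝓝 (F a 0)) := by
  have := fun n : ℕ => ap_return F hF w (1 / ((n:ℝ) + 1)) (by positivity) n
  choose r h1 h2 using this
  refine ⟨r, h1, fun a => ?_⟩
  rw [tendsto_iff_norm_sub_tendsto_zero]
  exact squeeze_zero (fun _ => norm_nonneg _) (fun n => (h2 n a).le) tendsto_one_div_add_atTop_nhds_zero_nat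

lemma generic_dir {d : ℕ} {S : Finset (Rd d)} (I : Finset (Fin d → ℕ))
    (c : Rd d → (Fin d → ℕ) → ℂ) (hc : ∀ p ∈ S, ∃ k ∈ I, c p k ≠ 0) :
    ∃ w : Rd d, ∀ p ∈ S, ∑ k ∈ I, monom k w * c p k ≠ 0 := by
  classical
  let P : Rd d → MvPolynomial (Fin d) ℂ := fun p =>
    ∑ k ∈ I, MvPolynomial.monomial (Finsupp.equivFunOnFinite.symm k) (c p k)
  have hP : ∀ p ∈ S, P p ≠ 0 := by
    intro p hp h0
    obtain ⟨k, hk, hne⟩ := hc p hp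
    apply hne
    have := congrArg (MvPolynomial.coeff (Finsupp.equivFunOnFinite.symm k)) h0
    simp only [P, MvPolynomial.coeff_sum, MvPolynomial.coeff_monomial, MvPolynomial.coeff_zero,
      EmbeddingLike.apply_eq_iff_eq] at this
    simpa [hk] using this
  have hQ : ∏ p ∈ S, P p ≠ 0 := Finset.prod_ne_zero_iff.2 hP
  by_contra hcon
  push Not at hcon
  apply hQ
  refine MvPolynomial.funext_set (fun _ => range (Complex.ofReal))
    (fun _ => infinite_range_of_injective Complex.ofReal_injective) fun x hx => ?_
  choose y hy using fun i => hx i (mem_univ i)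
  obtain ⟨p, hp, h⟩ := hcon (WithLp.toLp 2 y)
  rw [map_prod, map_zero]
  refine Finset.prod_eq_zero hp ?_
  rw [← h]
  simp only [P, map_sum, MvPolynomial.eval_monomial]
  refine Finset.sum_congr rfl fun k _ => ?_
  rw [Finsupp.prod_fintype _ _ (by simp), mul_comm]
  simp [monom, hy]

lemma monom_temperate {d : ℕ} (k : Fin d → ℕ) :
    Function.HasTemperateGrowth (monom k : Rd d → ℂ) := by
  classical
  have h : ∀ s : Finset (Fin d), Function.HasTemperateGrowth
      (fun x : Rd d => ∏ i ∈ s, ((x i : ℝ) : ℂ) ^ k i) := by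
    intro s
    induction s using Finset.induction_on with
    | empty => simpa using Function.HasTemperateGrowth.const (1 : ℂ)
    | insert a s ha ih =>
      simp only [Finset.prod_insert ha]
      refine Function.HasTemperateGrowth.mul (Function.HasTemperateGrowth.pow ?_ _) ih
      exact (Complex.ofRealCLM.comp (EuclideanSpace.proj a : Rd d →L[ℝ] ℝ)).hasTemperateGrowth
  convert! h Finset.univ using 2 with x
  simp [monom]

/-- multiplication by a monomial -/
def MonMul {d : ℕ} (k : Fin d → ℕ) : SchwartzMap (Rd d) ℂ →L[ℂ] SchwartzMap (Rd d) ℂ :=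
  SchwartzMap.smulLeftCLM ℂ (monom k)

lemma MonMul_apply {d : ℕ} (k : Fin d → ℕ) (φ : SchwartzMap (Rd d) ℂ) (x : Rd d) :
    MonMul k φ x = monom k x * φ x := by
  simp [MonMul, SchwartzMap.smulLeftCLM_apply_apply (monom_temperate k)]

/-- translation -/
def Tr {d : ℕ} (t : Rd d) : SchwartzMap (Rd d) ℂ →L[ℂ] SchwartzMap (Rd d) ℂ :=
  SchwartzMap.compSubConstCLM ℂ t

lemma Tr_apply {d : ℕ} (t : Rd d) (φ : SchwartzMap (Rd d) ℂ) (x : Rd d) :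
    Tr t φ x = φ (x - t) := rfl

/-- multi-indices below `k` -/
def JJ {d : ℕ} (k : Fin d → ℕ) : Finset (Fin d → ℕ) :=
  Fintype.piFinset (fun i => Finset.range (k i + 1))

/-- multi binomial -/
def CC {d : ℕ} (k m : Fin d → ℕ) : ℂ := ∏ i, ((k i).choose (m i) : ℂ)

lemma monom_add {d : ℕ} (k : Fin d → ℕ) (u t : Rd d) :
    monom k (u + t) = ∑ m ∈ JJ k, CC k m * monom (fun i => k i - m i) t * monom m u := by
  simp only [monom, Complex.ofReal_prod, Complex.ofReal_pow, PiLp.add_apply, Complex.ofReal_add,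
    CC, JJ]
  simp only [add_pow]
  rw [Finset.prod_univ_sum]
  refine Finset.sum_congr rfl fun m _ => ?_
  rw [← Finset.prod_mul_distrib, ← Finset.prod_mul_distrib]
  refine Finset.prod_congr rfl fun i _ => ?_
  ring

lemma MonMul_Tr {d : ℕ} (k : Fin d → ℕ) (t : Rd d) (φ : SchwartzMap (Rd d) ℂ) :
    MonMul k (Tr t φ) = ∑ m ∈ JJ k, (CC k m * monom (fun i => k i - m i) t) • Tr t (MonMul m φ) := by
  ext x
  rw [MonMul_apply, SchwartzMap.sum_apply, Tr_apply]
  conv_lhs => rw [← sub_add_cancel x t, monom_add, Finset.sum_mul]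
  refine Finset.sum_congr rfl fun m _ => ?_
  simp only [SchwartzMap.smul_apply, Tr_apply, MonMul_apply, smul_eq_mul, sub_add_cancel]
  ring

lemma monom_smul {d : ℕ} (k : Fin d → ℕ) (r : ℝ) (w : Rd d) :
    monom k (r • w) = (r : ℂ) ^ (∑ i, k i) * monom k w := by
  simp [monom, mul_pow, Finset.prod_mul_distrib, Finset.prod_pow_eq_pow_sum]

lemma monom_zero {d : ℕ} (w : Rd d) : monom (0 : Fin d → ℕ) w = 1 := by
  simp [monom]

lemma ap_Tr {d : ℕ} {f : TemperedDist d} (hf : APDistribution f) (φ : SchwartzMap (Rd d) ℂ)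
    (hc : HasCompactSupport (⇑φ)) : APFunction fun t => f (Tr t φ) := by
  refine hf (fun z => φ (-z)) ?_ ?_ (fun t => Tr t φ) ?_
  · exact (φ.smooth _).comp contDiff_neg
  · exact hc.comp_homeomorph (Homeomorph.neg (Rd d))
  · intro t y
    rw [Tr_apply]; congr 1; abel

lemma ratio_lim (r : ℕ → ℕ) (hr : ∀ n, n < r n) {e K : ℕ} (he : e ≤ K) :
    Tendsto (fun n => ((r n : ℝ) : ℂ) ^ e / ((r n : ℝ) : ℂ) ^ K) atTop
      (𝓝 (if e = K then 1 else 0)) := by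
  split_ifs with h
  · subst h
    refine Tendsto.congr (fun n => ?_) tendsto_const_nhds
    have : r n ≠ 0 := by have := hr n; omega
    rw [div_self]
    simp [this]
  · have h1 : Tendsto (fun n => (r n : ℝ)) atTop atTop :=
      tendsto_natCast_atTop_atTop.comp (tendsto_atTop_mono (fun n => (hr n).le) tendsto_id)
    have h2 := (tendsto_pow_div_pow_atTop_zero (𝕜 := ℝ) (lt_of_le_of_ne he h)).comp h1
    have h3 := (Complex.continuous_ofReal.tendsto 0).comp h2
    simpa [Function.comp_def] using h3

lemma mem_mIdx {d K : ℕ} {k : Fin d → ℕ} : k ∈ mIdx d K ↔ ∑ i, k i ≤ K := by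
  simp only [mIdx, Finset.mem_filter, Finset.mem_Iic, and_iff_right_iff_imp]
  intro h i
  exact (Finset.single_le_sum (f := k) (fun _ _ => Nat.zero_le _) (Finset.mem_univ i)).trans h

lemma main_lim {d K : ℕ} (fk : (Fin d → ℕ) → TemperedDist d) (f : TemperedDist d)
    (hsum : ∀ (φ : SchwartzMap (Rd d) ℂ) (Ψ : (Fin d → ℕ) → SchwartzMap (Rd d) ℂ),
      (∀ k ∈ mIdx d K, ∀ x : Rd d, Ψ k x = monom k x * φ x) →
      f φ = ∑ k ∈ mIdx d K, fk k (Ψ k)) (φ : SchwartzMap (Rd d) ℂ) (w : Rd d)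
    (r : ℕ → ℕ) (hr : ∀ n, n < r n)
    (hlim : ∀ k ∈ mIdx d K, ∀ m ∈ JJ k,
      Tendsto (fun n => fk k (Tr ((r n : ℝ) • w) (MonMul m φ))) atTop (𝓝 (fk k (MonMul m φ)))) :
    Tendsto (fun n => f (Tr ((r n : ℝ) • w) φ) / ((r n : ℝ) : ℂ) ^ K) atTop
      (𝓝 (∑ k ∈ (mIdx d K).filter (fun k => ∑ i, k i = K), monom k w * fk k φ)) := by
  have e1 : ∀ n, f (Tr ((r n : ℝ) • w) φ) / ((r n : ℝ) : ℂ) ^ K =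
      ∑ k ∈ mIdx d K, ∑ m ∈ JJ k, CC k m * monom (fun i => k i - m i) w *
        (((r n : ℝ) : ℂ) ^ (∑ i, (k i - m i)) / ((r n : ℝ) : ℂ) ^ K) *
          fk k (Tr ((r n : ℝ) • w) (MonMul m φ)) := by
    intro n
    rw [hsum _ (fun k => MonMul k (Tr ((r n : ℝ) • w) φ)) (fun k _ x => MonMul_apply _ _ _),
      Finset.sum_div]
    refine Finset.sum_congr rfl fun k _ => ?_
    rw [MonMul_Tr, map_sum, Finset.sum_div]
    refine Finset.sum_congr rfl fun m _ => ?_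
    rw [map_smul, monom_smul, smul_eq_mul]
    ring
  simp only [e1]
  have e2 : ∑ k ∈ (mIdx d K).filter (fun k => ∑ i, k i = K), monom k w * fk k φ =
      ∑ k ∈ mIdx d K, ∑ m ∈ JJ k, CC k m * monom (fun i => k i - m i) w *
        (if (∑ i, (k i - m i)) = K then 1 else 0) * fk k (MonMul m φ) := by
    rw [Finset.sum_filter]
    refine Finset.sum_congr rfl fun k hk => ?_
    rw [mem_mIdx] at hk
    have hM0 : MonMul (0 : Fin d → ℕ) φ = φ := by
      ext x; rw [MonMul_apply, monom_zero, one_mul]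
    rw [Finset.sum_eq_single (0 : Fin d → ℕ)]
    · simp only [CC, Pi.zero_apply, Nat.choose_zero_right, Nat.sub_zero, hM0]
      split_ifs <;> simp
    · intro m hm hm0
      rw [if_neg]
      · simp
      · intro h
        apply hm0
        have hle : ∀ i, m i ≤ k i := by
          intro i
          have := Fintype.mem_piFinset.1 hm i
          rw [Finset.mem_range] at this
          omega
        have : ∑ i, (k i - m i) + ∑ i, m i = ∑ i, k i := by
          rw [← Finset.sum_add_distrib]
          exact Finset.sum_congr rfl fun i _ => Nat.sub_add_cancel (hle i)
        have h0 : ∑ i, m i = 0 := by omega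
        ext i
        exact Finset.sum_eq_zero_iff.1 h0 i (Finset.mem_univ i)
    · intro h
      exact absurd (by simp [JJ]) h
  rw [e2]
  refine tendsto_finsetSum _ fun k hk => tendsto_finsetSum _ fun m hm => ?_
  refine Tendsto.mul (Tendsto.mul tendsto_const_nhds (ratio_lim r hr ?_)) (hlim k hk m hm)
  rw [mem_mIdx] at hk
  exact (Finset.sum_le_sum fun i _ => Nat.sub_le _ _).trans hk

lemma BD_iff {d : ℕ} (A : Set (Rd d)) :
    BoundedDensity A ↔ ∃ N : ℕ, ∀ x : Rd d, (A ∩ Metric.ball x 1).encard ≤ N := by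
  constructor
  · rintro ⟨h1, N, h2⟩
    refine ⟨N, fun x => ?_⟩
    rw [← (h1 x 1).cast_ncard_eq]
    exact_mod_cast h2 x
  · rintro ⟨N, h⟩
    have hf : ∀ x, (A ∩ Metric.ball x 1).Finite := fun x =>
      Set.finite_of_encard_le_coe (h x)
    refine ⟨fun x r => ?_, N, fun x => ?_⟩
    · obtain ⟨t, -, ht⟩ := (isCompact_closedBall x r).elim_nhds_subcover (fun y => Metric.ball y 1)
        (fun y _ => Metric.ball_mem_nhds y one_pos)
      refine (t.finite_toSet.biUnion (fun y _ => hf y)).subset ?_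
      rintro y ⟨hy, hyr⟩
      obtain ⟨z, hz, hyz⟩ := mem_iUnion₂.1 (ht (ball_subset_closedBall hyr))
      exact mem_iUnion₂.2 ⟨z, hz, hy, hyz⟩
    · have := h x
      rw [← (hf x).cast_ncard_eq] at this
      exact_mod_cast this

lemma BD_union {d : ℕ} {A B : Set (Rd d)} (hA : BoundedDensity A) (hB : BoundedDensity B) :
    BoundedDensity (A ∪ B) := by
  rw [BD_iff] at *
  obtain ⟨N, hN⟩ := hA
  obtain ⟨M, hM⟩ := hB
  refine ⟨N + M, fun x => ?_⟩
  rw [union_inter_distrib_right]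
  refine (encard_union_le _ _).trans ?_
  push_cast
  exact add_le_add (hN x) (hM x)

lemma BD_mono {d : ℕ} {A B : Set (Rd d)} (hB : BoundedDensity B) (h : A ⊆ B) :
    BoundedDensity A := by
  rw [BD_iff] at *
  obtain ⟨M, hM⟩ := hB
  exact ⟨M, fun x => (encard_le_encard (inter_subset_inter_left _ h)).trans (hM x)⟩

lemma BD_biUnion {d : ℕ} {ι : Type*} (I : Finset ι) (A : ι → Set (Rd d))
    (h : ∀ i ∈ I, BoundedDensity (A i)) : BoundedDensity (⋃ i ∈ I, A i) := by
  classical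
  induction I using Finset.induction_on with
  | empty => rw [BD_iff]; exact ⟨0, by simp⟩
  | insert a s ha ih =>
    rw [Finset.set_biUnion_insert]
    exact BD_union (h a (by simp)) (ih fun i hi => h i (by simp [hi]))

lemma top_BD {d K : ℕ} (fk : (Fin d → ℕ) → TemperedDist d) (f : TemperedDist d)
    (hap : ∀ k ∈ mIdx d K, APDistribution (fk k))
    (hsum : ∀ (φ : SchwartzMap (Rd d) ℂ) (Ψ : (Fin d → ℕ) → SchwartzMap (Rd d) ℂ),
      (∀ k ∈ mIdx d K, ∀ x : Rd d, Ψ k x = monom k x * φ x) →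
      f φ = ∑ k ∈ mIdx d K, fk k (Ψ k))
    (hBD : BoundedDensity (tdSupport f)) (k₀ : Fin d → ℕ) (hk₀ : ∑ i, k₀ i = K) :
    BoundedDensity (tdSupport (fk k₀)) := by
  classical
  rw [BD_iff] at *
  obtain ⟨N, hN⟩ := hBD
  refine ⟨N, fun x => ?_⟩
  have key : ∀ S : Finset (Rd d), (S : Set (Rd d)) ⊆ tdSupport (fk k₀) ∩ ball x 1 →
      S.card ≤ N := by
    intro S hS
    obtain ⟨U, hU, hdisj⟩ := S.finite_toSet.t2_separation
    have h1 : ∀ p ∈ S, ∃ φ : SchwartzMap (Rd d) ℂ, HasCompactSupport (⇑φ) ∧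
        tsupport (⇑φ) ⊆ U p ∩ ball x 1 ∧ fk k₀ φ ≠ 0 := fun p hp =>
      (hS hp).1 _ ((hU p).2.inter isOpen_ball) ⟨(hU p).1, (hS hp).2⟩
    choose! φ hφc hφs hφ using h1
    obtain ⟨w, hw⟩ := generic_dir (S := S) ((mIdx d K).filter (fun k => ∑ i, k i = K))
      (fun p k => fk k (φ p)) (fun p hp => ⟨k₀, by simp [mem_mIdx, hk₀], hφ p hp⟩)
    have hcm : ∀ p ∈ S, ∀ m, HasCompactSupport (⇑(MonMul m (φ p))) := by
      intro p hp m
      have : (⇑(MonMul m (φ p))) = fun x => monom m x * φ p x := funext fun x => MonMul_apply _ _ _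
      rw [this]
      exact (hφc p hp).mul_left
    let ι := S × (Σ k : mIdx d K, JJ (k : Fin d → ℕ))
    obtain ⟨r, hr, hlim⟩ := ap_seq (ι := ι)
      (fun a t => fk a.2.1 (Tr t (MonMul (a.2.2 : Fin d → ℕ) (φ a.1))))
      (fun a => ap_Tr (hap _ a.2.1.2) _ (hcm _ a.1.2 _)) w
    have hev : ∀ᶠ n in atTop, ∀ p ∈ S, f (Tr ((r n : ℝ) • w) (φ p)) ≠ 0 := by
      rw [Filter.eventually_all_finset]
      intro p hp
      have := main_lim fk f hsum (φ p) w r hr (fun k hk m hm => by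
        have h := hlim (⟨p, hp⟩, ⟨⟨k, hk⟩, ⟨m, hm⟩⟩)
        have h0 : Tr 0 (MonMul m (φ p)) = MonMul m (φ p) := by
          ext y; rw [Tr_apply, sub_zero]
        simpa only [h0] using h)
      filter_upwards [this.eventually_ne (hw p hp)] with n hn h0
      apply hn
      rw [h0, zero_div]
    obtain ⟨n, hn⟩ := hev.exists
    set t := (r n : ℝ) • w
    have htr : ∀ p, ∀ q ∈ tsupport (⇑(Tr t (φ p))), q - t ∈ tsupport (⇑(φ p)) := by
      intro p q hq
      exact tsupport_comp_subset_preimage (φ p) (f := fun y => y - t) (by fun_prop) hq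
    have hq : ∀ p ∈ S, ∃ q ∈ tdSupport f, q - t ∈ U p ∩ ball x 1 := by
      intro p hp
      obtain ⟨q, h1, h2⟩ := exists_mem_supp f (Tr t (φ p))
        ((hφc p hp).comp_homeomorph (Homeomorph.subRight t)) (hn p hp)
      exact ⟨q, h1, hφs p hp (htr p q h2)⟩
    choose! q hq1 hq2 using hq
    have hinj : Set.InjOn q S := by
      intro p hp p' hp' h
      by_contra hne
      exact (Set.disjoint_left.1 (hdisj hp hp' hne)) (hq2 p hp).1 (h ▸ (hq2 p' hp').1)
    have hsub : q '' S ⊆ tdSupport f ∩ ball (x + t) 1 := by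
      rintro _ ⟨p, hp, rfl⟩
      refine ⟨hq1 p hp, ?_⟩
      have := (hq2 p hp).2
      rw [mem_ball, dist_eq_norm] at this ⊢
      rwa [sub_add_eq_sub_sub_swap]
    have := (encard_le_encard hsub).trans (hN (x + t))
    rw [hinj.encard_image, Set.encard_coe_eq_coe_finsetCard] at this
    exact_mod_cast this
  by_contra hlt
  push Not at hlt
  obtain ⟨T, hT, hTc⟩ := Set.exists_subset_encard_eq (Order.add_one_le_of_lt hlt)
  have hTf : T.Finite := Set.finite_of_encard_eq_coe (k := N + 1) (by simpa using hTc)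
  have := key hTf.toFinset (by simpa using hT)
  rw [hTf.encard_eq_coe_toFinset_card] at hTc
  have h2 : hTf.toFinset.card = N + 1 := by exact_mod_cast hTc
  omega

lemma all_BD {d : ℕ} (fk : (Fin d → ℕ) → TemperedDist d) (K : ℕ) :
    ∀ (f : TemperedDist d)
    (_ : ∀ k ∈ mIdx d K, APDistribution (fk k))
    (_ : ∀ (φ : SchwartzMap (Rd d) ℂ) (Ψ : (Fin d → ℕ) → SchwartzMap (Rd d) ℂ),
      (∀ k ∈ mIdx d K, ∀ x : Rd d, Ψ k x = monom k x * φ x) →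
      f φ = ∑ k ∈ mIdx d K, fk k (Ψ k))
    (_ : BoundedDensity (tdSupport f)),
    ∀ k ∈ mIdx d K, BoundedDensity (tdSupport (fk k)) := by
  classical
  induction K with
  | zero =>
    intro f hap hsum hBD k hk
    exact top_BD fk f hap hsum hBD k (by rw [mem_mIdx] at hk; omega)
  | succ K ih =>
    intro f hap hsum hBD
    have htop := top_BD fk f hap hsum hBD
    have hsplit : (mIdx d (K+1)).filter (fun k => ¬ ∑ i, k i = K + 1) = mIdx d K := by
      ext k; simp only [Finset.mem_filter, mem_mIdx]; omega
    set I := (mIdx d (K+1)).filter (fun k => ∑ i, k i = K + 1) with hI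
    let f' : TemperedDist d := f - ∑ k ∈ I, (fk k).comp (MonMul k)
    have hf' : ∀ φ, f' φ = f φ - ∑ k ∈ I, fk k (MonMul k φ) := by
      intro φ; simp [f', ContinuousLinearMap.sum_apply]
    have hmono : ∀ k ∈ mIdx d K, k ∈ mIdx d (K+1) := by
      intro k; simp only [mem_mIdx]; omega
    have hsub : tdSupport f' ⊆ tdSupport f ∪ ⋃ k ∈ I, tdSupport (fk k) := by
      intro x hx
      by_contra hcon
      simp only [mem_union, mem_iUnion, not_or, not_exists] at hcon
      obtain ⟨h1, h2⟩ := hcon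
      have hns : ∀ g : TemperedDist d, x ∉ tdSupport g → ∃ U : Set (Rd d), IsOpen U ∧ x ∈ U ∧
        ∀ ψ : SchwartzMap (Rd d) ℂ, HasCompactSupport (⇑ψ) → tsupport (⇑ψ) ⊆ U → g ψ = 0 := by
        intro g hg
        simp only [tdSupport, mem_setOf_eq, not_forall, not_exists, not_and, not_not] at hg
        obtain ⟨U, hU, hxU, h⟩ := hg
        exact ⟨U, hU, hxU, h⟩
      obtain ⟨U, hU, hxU, hUf⟩ := hns f h1
      have h3 := fun k (hk : k ∈ I) => hns (fk k) (h2 k hk)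
      choose! V hV hxV hVf using h3
      obtain ⟨φ, hc, hs, hne⟩ := hx (U ∩ ⋂ k ∈ I, V k)
        (hU.inter (isOpen_biInter_finset hV)) ⟨hxU, mem_iInter₂.2 hxV⟩
      apply hne
      rw [hf', hUf φ hc (hs.trans inter_subset_left), zero_sub, neg_eq_zero]
      refine Finset.sum_eq_zero fun k hk => ?_
      have e : (⇑(MonMul k φ)) = fun x => monom k x * φ x := funext fun x => MonMul_apply _ _ _
      refine hVf k hk _ (by rw [e]; exact hc.mul_left) ?_
      rw [e]
      exact (tsupport_mul_subset_right).trans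
        (hs.trans (inter_subset_right.trans (biInter_subset_of_mem hk)))
    have hlow := ih f' (fun k hk => hap k (hmono k hk)) (by
      intro φ Ψ hΨ
      rw [hf', hsum φ (fun k => MonMul k φ) (fun k _ x => MonMul_apply _ _ _),
        ← Finset.sum_filter_add_sum_filter_not (mIdx d (K+1)) (fun k => ∑ i, k i = K + 1),
        hsplit, ← hI, add_sub_cancel_left]
      refine Finset.sum_congr rfl fun k hk => ?_
      congr 1
      ext x
      rw [MonMul_apply, hΨ k hk])
      (BD_mono (BD_union hBD (BD_biUnion I _ fun k hk => htop k (Finset.mem_filter.1 hk).2)) hsub)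
    intro k hk
    by_cases h : ∑ i, k i = K + 1
    · exact htop k h
    · refine hlow k ?_
      rw [mem_mIdx] at hk ⊢; omega

end Helpers

/-- (Proposition 4.) Let `f_k`, `‖k‖ ≤ K`, be almost periodic
tempered distributions on `ℝ^d` and let `f = Σ_{‖k‖≤K} x^k f_k` (where
`(x^k f_k)(φ) = f_k(x^k φ)`). If `supp f` has bounded density, then every
`supp f_k` has bounded density. -/
theorem statement12 {d K : ℕ} (fk : (Fin d → ℕ) → TemperedDist d)
    (f : TemperedDist d)
    (hap : ∀ k ∈ mIdx d K, APDistribution (fk k))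
    (hsum : ∀ (φ : SchwartzMap (Rd d) ℂ) (Ψ : (Fin d → ℕ) → SchwartzMap (Rd d) ℂ),
      (∀ k ∈ mIdx d K, ∀ x : Rd d, Ψ k x = monom k x * φ x) →
      f φ = ∑ k ∈ mIdx d K, fk k (Ψ k))
    (hBD : BoundedDensity (tdSupport f)) :
    ∀ k ∈ mIdx d K, BoundedDensity (tdSupport (fk k)) := by
  exact all_BD fk K f hap hsum hBD
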